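/- arXiv:2512.13075 — 2 statements merged into one kernel-verified Lean document; each statement's English description precedes it below -/
import Mathlib

section
/- Let (Σ_k^+, d, σ) be the full one-sided shift on k symbols and let μ be the uniform Bernoulli measure on Σ_k^+, i.e., the infinite product of the probability measure assigning mass 1/k to each of the k symbols. Then for every α ≥ 0 and every x ∈ Σ_k^+, P_μ^α(σ,x,1) = lim_{ε→0} liminf_{n→∞} (−log μ(B_n^α(x,ε)))/n ≥ (1+α)·log k; consequently P_μ^α(σ,1) = ∫ P_μ^α(σ,x,1) dμ(x) ≥ (1+α)·log k. -/
open Filter Set MeasureTheory ENNReal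
open scoped Classical NNReal

noncomputable section

namespace AlphaBS

variable {X : Type*}

/-- Birkhoff sum `S_n φ (x) = ∑_{j<n} φ(f^j x)`. -/
def birk (f : X → X) (φ : X → ℝ) (n : ℕ) (x : X) : ℝ :=
  ∑ j ∈ Finset.range n, φ (f^[j] x)

/-- The α-Bowen ball `B_n^α(x,ε) = {y : d_n^α(x,y) < ε}`, where
`d_n^α(x,y) = max_{0 ≤ i ≤ n-1} e^{αi} d(f^i x, f^i y)`, w.r.t. an explicit distance `d`. -/
def bowenBall (d : X → X → ℝ) (f : X → X) (α : ℝ) (n : ℕ) (x : X) (ε : ℝ) : Set X :=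
  {y | ∀ i < n, Real.exp (α * i) * d (f^[i] x) (f^[i] y) < ε}

section covers

variable (d : X → X → ℝ) (f : X → X)

/-- `M^α(K,s,ε,n,φ)`: infimum over countable families of α-Bowen balls covering `K`. -/
def Mpre (φ : X → ℝ) (α s ε : ℝ) (N : ℕ) (K : Set X) : ℝ≥0∞ :=
  ⨅ (c : ℕ → X) (m : ℕ → ℕ) (I : Set ℕ) (_ : I.Nonempty) (_ : ∀ i ∈ I, N ≤ m i)
    (_ : K ⊆ ⋃ i ∈ I, bowenBall d f α (m i) (c i) ε),
    ∑' i : I, ENNReal.ofReal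
      (Real.exp (-s * sSup (birk f φ (m i) '' bowenBall d f α (m i) (c i) ε)))

/-- `M^α(K,s,ε,φ) = lim_{n→∞} M^α(K,s,ε,n,φ)` (the quantity is nondecreasing in `n`). -/
def Mlim (φ : X → ℝ) (α s ε : ℝ) (K : Set X) : ℝ≥0∞ := ⨆ N : ℕ, Mpre d f φ α s ε N K

/-- `M^α(K,ε,φ) = inf {s ≥ 0 : M^α(K,s,ε,φ) = 0}`. -/
def Mcrit (φ : X → ℝ) (α ε : ℝ) (K : Set X) : EReal :=
  ⨅ (s : ℝ) (_ : 0 ≤ s) (_ : Mlim d f φ α s ε K = 0), (s : EReal)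

/-- The α-BS dimension `dim_BS^α(f,K,φ) = lim_{ε→0} M^α(K,ε,φ)`
(the quantity is nonincreasing in `ε`). -/
def dimBS (φ : X → ℝ) (α : ℝ) (K : Set X) : EReal :=
  ⨆ (ε : ℝ) (_ : 0 < ε), Mcrit d f φ α ε K

/-- `M^{α,1}(K,s,ε,n,φ)`: the variant with weights `exp(-s·S_{n_i}φ(x_i))` at the centers. -/
def M1pre (φ : X → ℝ) (α s ε : ℝ) (N : ℕ) (K : Set X) : ℝ≥0∞ :=
  ⨅ (c : ℕ → X) (m : ℕ → ℕ) (I : Set ℕ) (_ : I.Nonempty) (_ : ∀ i ∈ I, N ≤ m i)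
    (_ : K ⊆ ⋃ i ∈ I, bowenBall d f α (m i) (c i) ε),
    ∑' i : I, ENNReal.ofReal (Real.exp (-s * birk f φ (m i) (c i)))

def M1lim (φ : X → ℝ) (α s ε : ℝ) (K : Set X) : ℝ≥0∞ := ⨆ N : ℕ, M1pre d f φ α s ε N K

def M1crit (φ : X → ℝ) (α ε : ℝ) (K : Set X) : EReal :=
  ⨅ (s : ℝ) (_ : 0 ≤ s) (_ : M1lim d f φ α s ε K = 0), (s : EReal)

/-- The modified α-BS dimension `\widetilde{dim}_{BS}^α(f,K,φ)`. -/
def dimBS1 (φ : X → ℝ) (α : ℝ) (K : Set X) : EReal :=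
  ⨆ (ε : ℝ) (_ : 0 < ε), M1crit d f φ α ε K

/-- `M^α(K,s,ε,n,1)`: covering quantity with weights `exp(-s n_i)`. -/
def Epre (α s ε : ℝ) (N : ℕ) (K : Set X) : ℝ≥0∞ :=
  ⨅ (c : ℕ → X) (m : ℕ → ℕ) (I : Set ℕ) (_ : I.Nonempty) (_ : ∀ i ∈ I, N ≤ m i)
    (_ : K ⊆ ⋃ i ∈ I, bowenBall d f α (m i) (c i) ε),
    ∑' i : I, ENNReal.ofReal (Real.exp (-s * (m i : ℝ)))

def Elim (α s ε : ℝ) (K : Set X) : ℝ≥0∞ := ⨆ N : ℕ, Epre d f α s ε N K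

def Ecrit (α ε : ℝ) (K : Set X) : EReal :=
  ⨅ (s : ℝ) (_ : 0 ≤ s) (_ : Elim d f α s ε K = 0), (s : EReal)

/-- The α-Bowen topological entropy `h_top^{α,B}(f,K)` (i.e. `dim_BS^α(f,K,1)`,
computed with weights `exp(-s n_i)`). -/
def entB (α : ℝ) (K : Set X) : EReal := ⨆ (ε : ℝ) (_ : 0 < ε), Ecrit d f α ε K

/-- `ℳ_B^α(K,s,ε,n,h)`: the Pesin pressure covering quantity. -/
def Ppre (h : X → ℝ) (α s ε : ℝ) (N : ℕ) (K : Set X) : ℝ≥0∞ :=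
  ⨅ (c : ℕ → X) (m : ℕ → ℕ) (I : Set ℕ) (_ : I.Nonempty) (_ : ∀ i ∈ I, N ≤ m i)
    (_ : K ⊆ ⋃ i ∈ I, bowenBall d f α (m i) (c i) ε),
    ∑' i : I, ENNReal.ofReal
      (Real.exp (-s * (m i : ℝ) + sSup (birk f h (m i) '' bowenBall d f α (m i) (c i) ε)))

def Plim (h : X → ℝ) (α s ε : ℝ) (K : Set X) : ℝ≥0∞ := ⨆ N : ℕ, Ppre d f h α s ε N K

/-- `ℳ_B^α(K,ε,h) = inf {s ∈ ℝ : ℳ_B^α(K,s,ε,h) = 0}`. -/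
def Pcrit (h : X → ℝ) (α ε : ℝ) (K : Set X) : EReal :=
  ⨅ (s : ℝ) (_ : Plim d f h α s ε K = 0), (s : EReal)

/-- The α-Pesin topological pressure `P_B^α(f,K,h)`. -/
def pressureB (h : X → ℝ) (α : ℝ) (K : Set X) : EReal :=
  ⨆ (ε : ℝ) (_ : 0 < ε), Pcrit d f h α ε K

/-- `W^α(K,s,ε,n,φ)`: the weighted covering quantity. -/
def Wpre (φ : X → ℝ) (α s ε : ℝ) (N : ℕ) (K : Set X) : ℝ≥0∞ :=
  ⨅ (c : ℕ → X) (m : ℕ → ℕ) (w : ℕ → ℝ) (I : Set ℕ) (_ : I.Nonempty)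
    (_ : ∀ i ∈ I, N ≤ m i) (_ : ∀ i ∈ I, 0 < w i)
    (_ : ∀ x ∈ K, (1 : ℝ≥0∞) ≤
      ∑' i : I, (bowenBall d f α (m i) (c i) ε).indicator
        (fun _ => ENNReal.ofReal (w i)) x),
    ∑' i : I, ENNReal.ofReal (w i * Real.exp (-s * birk f φ (m i) (c i)))

def Wlim (φ : X → ℝ) (α s ε : ℝ) (K : Set X) : ℝ≥0∞ := ⨆ N : ℕ, Wpre d f φ α s ε N K

def Wcrit (φ : X → ℝ) (α ε : ℝ) (K : Set X) : EReal :=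
  ⨅ (s : ℝ) (_ : 0 ≤ s) (_ : Wlim d f φ α s ε K = 0), (s : EReal)

/-- The weighted α-BS dimension `dim_BS^{α,W}(f,K,φ)`. -/
def dimBSW (φ : X → ℝ) (α : ℝ) (K : Set X) : EReal :=
  ⨆ (ε : ℝ) (_ : 0 < ε), Wcrit d f φ α ε K

/-- `r_n(f,α,X,ε)`: the smallest cardinality of an `(n,α,ε)`-spanning set of `X`. -/
def spanNum (α ε : ℝ) (n : ℕ) : ℕ :=
  sInf {m : ℕ | ∃ E : Finset X, E.card = m ∧
    ∀ x : X, ∃ y ∈ E, ∀ i < n, Real.exp (α * i) * d (f^[i] y) (f^[i] x) < ε}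

/-- `h_top^α(f,X,ε) = limsup_n (1/n) log r_n(f,α,X,ε)`. -/
def htopSpanE (α ε : ℝ) : EReal :=
  limsup (fun n : ℕ => ((Real.log (spanNum d f α ε n) / n : ℝ) : EReal)) atTop

/-- the α-topological entropy `h_top^α(f,X) = lim_{ε→0} h_top^α(f,X,ε)`
(the quantity is nonincreasing in `ε`). -/
def htopSpan (α : ℝ) : EReal := ⨆ (ε : ℝ) (_ : 0 < ε), htopSpanE d f α ε

/-- `r_n(X, e^{-nε})`: smallest number of ε-neutralized Bowen balls needed to cover `X`. -/
def neutNum (ε : ℝ) (n : ℕ) : ℕ :=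
  sInf {m : ℕ | ∃ E : Finset X, E.card = m ∧
    ∀ x : X, ∃ y ∈ E, ∀ j < n, d (f^[j] y) (f^[j] x) < Real.exp (-(n : ℝ) * ε)}

/-- the neutralized ε-topological entropy. -/
def neutEntE (ε : ℝ) : EReal :=
  limsup (fun n : ℕ => ((Real.log (neutNum d f ε n) / n : ℝ) : EReal)) atTop

/-- the neutralized topological entropy `\tilde h_top(f,X) = inf_{ε>0} \tilde h_top(f,X,ε)`. -/
def neutEnt : EReal := ⨅ (ε : ℝ) (_ : 0 < ε), neutEntE d f ε

end covers

/-- `-log t`, valued in `[0,∞]` for `t ∈ [0,1]`, with `-log 0 = ∞`. -/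
def negLog (t : ℝ≥0∞) : ℝ≥0∞ := if t = 0 then ⊤ else ENNReal.ofReal (-Real.log t.toReal)

section measure

variable [MeasurableSpace X]

/-- `P_μ^α(f,x,φ) = lim_{ε→0} liminf_n (-log μ(B_n^α(x,ε)))/S_nφ(x)`. -/
def localBKphi (d : X → X → ℝ) (f : X → X) (φ : X → ℝ) (α : ℝ) (μ : Measure X)
    (x : X) : ℝ≥0∞ :=
  ⨆ (ε : ℝ) (_ : 0 < ε),
    liminf (fun n : ℕ =>
      negLog (μ (bowenBall d f α n x ε)) / ENNReal.ofReal (birk f φ n x)) atTop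

/-- The α-local Brin–Katok entropy `P_μ^α(f,φ) = ∫ P_μ^α(f,x,φ) dμ(x)`. -/
def BKphi (d : X → X → ℝ) (f : X → X) (φ : X → ℝ) (α : ℝ) (μ : Measure X) : ℝ≥0∞ :=
  ∫⁻ x, localBKphi d f φ α μ x ∂μ

/-- `lim_{ε→0} liminf_n (-log μ(B_n^α(x,ε)))/n`. -/
def localBKn (d : X → X → ℝ) (f : X → X) (α : ℝ) (μ : Measure X) (x : X) : ℝ≥0∞ :=
  ⨆ (ε : ℝ) (_ : 0 < ε),
    liminf (fun n : ℕ => negLog (μ (bowenBall d f α n x ε)) / (n : ℝ≥0∞)) atTop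

/-- The lower α-local Brin–Katok entropy `\underline h_μ^{BK}(f,α)`. -/
def BKn (d : X → X → ℝ) (f : X → X) (α : ℝ) (μ : Measure X) : ℝ≥0∞ :=
  ∫⁻ x, localBKn d f α μ x ∂μ

end measure

/-- diameter of a set w.r.t. an explicit distance. -/
def ediamD (d : X → X → ℝ) (U : Set X) : ℝ≥0∞ :=
  ⨆ (x ∈ U) (y ∈ U), ENNReal.ofReal (d x y)

/-- pre-Hausdorff measure at scale `δ`. -/
def hausPre (d : X → X → ℝ) (s δ : ℝ) (E : Set X) : ℝ≥0∞ :=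
  ⨅ (U : ℕ → Set X) (_ : E ⊆ ⋃ i, U i) (_ : ∀ i, ediamD d (U i) ≤ ENNReal.ofReal δ),
    ∑' i, ediamD d (U i) ^ s

/-- `s`-dimensional Hausdorff measure w.r.t. an explicit distance. -/
def hausMeas (d : X → X → ℝ) (s : ℝ) (E : Set X) : ℝ≥0∞ :=
  ⨆ (δ : ℝ) (_ : 0 < δ), hausPre d s δ E

/-- Hausdorff dimension w.r.t. an explicit distance:
`dim_H(E,d) = inf {s ≥ 0 : H^s(E) = 0}`. -/
def hausDim (d : X → X → ℝ) (E : Set X) : ℝ≥0∞ :=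
  ⨅ (s : ℝ≥0) (_ : hausMeas d s E = 0), (s : ℝ≥0∞)

/-- The left shift on `Σ_k^+ = {0,…,k-1}^ℕ`. -/
def shiftMap (k : ℕ) : (ℕ → Fin k) → (ℕ → Fin k) := fun x n => x (n + 1)

/-- The metric `d(x,y) = e^{-n(x,y)}` on `Σ_k^+`, where `n(x,y)` is the least index
at which `x` and `y` differ, and `d(x,x) = 0`. -/
def shiftDist {k : ℕ} (x y : ℕ → Fin k) : ℝ :=
  if x = y then 0 else Real.exp (-((sInf {n : ℕ | x n ≠ y n} : ℕ) : ℝ))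

/-- The subshift of finite type `Σ_A^+` determined by the incidence matrix `A`. -/
def SFT {k : ℕ} (A : Matrix (Fin k) (Fin k) ℝ) : Type :=
  {x : ℕ → Fin k // ∀ n, A (x n) (x (n + 1)) = 1}

/-- The left shift restricted to `Σ_A^+`. -/
def sftShift {k : ℕ} (A : Matrix (Fin k) (Fin k) ℝ) : SFT A → SFT A :=
  fun x => ⟨fun n => x.1 (n + 1), fun n => x.2 (n + 1)⟩

/-- The metric `d` restricted to `Σ_A^+`. -/
def sftDist {k : ℕ} (A : Matrix (Fin k) (Fin k) ℝ) : SFT A → SFT A → ℝ :=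
  fun x y => shiftDist x.1 y.1

end AlphaBS

open AlphaBS

/-!
A point of `B_n^α(x, e^{-(1+α)})` is subject at time `n - 1` to the constraint
`d(σ^{n-1} x, σ^{n-1} y) < e^{-α(n-1) - (1+α)}`, which forces agreement with `x` up to coordinate
`(n - 1) + α(n - 1) + (1 + α) = (1 + α)n`; together with the earlier constraints this puts the ball
inside the cylinder of length `⌈(1 + α)n⌉`. So for every measure the exponential decay rate along
`α`-Bowen balls is at least `1 + α` times the decay rate along cylinders, and the latter is `log k`
for the uniform Bernoulli measure.
-/

namespace AlphaBS

open scoped Topology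

theorem negLog_antitone : Antitone negLog := by
  intro s t hst
  rcases eq_or_ne s 0 with rfl | hs
  · simp [negLog]
  have ht : t ≠ 0 := (hs.bot_lt.trans_le hst).ne'
  simp only [negLog, if_neg hs, if_neg ht]
  rcases eq_or_ne t ⊤ with rfl | ht_top
  · simp
  have hlog : Real.log s.toReal ≤ Real.log t.toReal :=
    Real.log_le_log (ENNReal.toReal_pos hs (ne_top_of_le_ne_top ht_top hst))
      (ENNReal.toReal_mono ht_top hst)
  exact ENNReal.ofReal_le_ofReal (neg_le_neg hlog)

theorem negLog_pow (t : ℝ≥0∞) (n : ℕ) : negLog (t ^ n) = n * negLog t := by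
  rcases eq_or_ne n 0 with rfl | hn
  · simp [negLog]
  rcases eq_or_ne t 0 with rfl | ht
  · simp [negLog, hn, ENNReal.mul_top]
  simp only [negLog, if_neg ht, if_neg (pow_ne_zero n ht), ENNReal.toReal_pow, Real.log_pow,
    ← mul_neg, ENNReal.ofReal_mul n.cast_nonneg, ENNReal.ofReal_natCast]

theorem negLog_inv {t : ℝ≥0∞} (ht : t ≠ ⊤) : negLog t⁻¹ = ENNReal.ofReal (Real.log t.toReal) := by
  simp [negLog, ht, ENNReal.toReal_inv, Real.log_inv]

theorem tendsto_negLog_pow_div (t : ℝ≥0∞) :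
    Tendsto (fun n : ℕ => negLog (t ^ n) / n) atTop (𝓝 (negLog t)) := by
  refine tendsto_const_nhds.congr' ?_
  filter_upwards [eventually_ne_atTop 0] with n hn
  rw [negLog_pow, mul_comm,
    ENNReal.mul_div_cancel_right (Nat.cast_ne_zero.2 hn) (ENNReal.natCast_ne_top n)]

theorem ofReal_mul_liminf_div_le_liminf_ceil_mul {c : ℝ} (hc : 0 < c) (u : ℕ → ℝ≥0∞) :
    ENNReal.ofReal c * liminf (fun n : ℕ => u n / n) atTop ≤
      liminf (fun n : ℕ => u ⌈c * n⌉₊ / n) atTop := by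
  have hceil : Tendsto (fun n : ℕ => ⌈c * n⌉₊) atTop atTop :=
    tendsto_nat_ceil_atTop.comp (tendsto_natCast_atTop_atTop.const_mul_atTop hc)
  have hscale (n : ℕ) : ENNReal.ofReal c * n ≤ (⌈c * n⌉₊ : ℝ≥0∞) := by
    rw [← ENNReal.ofReal_natCast, ← ENNReal.ofReal_natCast, ← ENNReal.ofReal_mul hc.le]
    exact ENNReal.ofReal_le_ofReal (Nat.le_ceil _)
  have hterm : ∀ᶠ n : ℕ in atTop,
      ENNReal.ofReal c * (u ⌈c * n⌉₊ / ⌈c * n⌉₊) ≤ u ⌈c * n⌉₊ / n := by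
    filter_upwards [eventually_ne_atTop 0] with n hn
    rw [ENNReal.le_div_iff_mul_le (.inl (Nat.cast_ne_zero.2 hn))
      (.inl (ENNReal.natCast_ne_top n))]
    calc ENNReal.ofReal c * (u ⌈c * n⌉₊ / ⌈c * n⌉₊) * n
        = ENNReal.ofReal c * n * (u ⌈c * n⌉₊ / ⌈c * n⌉₊) := mul_right_comm _ _ _
      _ ≤ ⌈c * n⌉₊ * (u ⌈c * n⌉₊ / ⌈c * n⌉₊) := by gcongr; exact hscale n
      _ ≤ u ⌈c * n⌉₊ := ENNReal.mul_div_le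
  calc ENNReal.ofReal c * liminf (fun n : ℕ => u n / n) atTop
      ≤ ENNReal.ofReal c * liminf (fun n : ℕ => u ⌈c * n⌉₊ / ⌈c * n⌉₊) atTop := by
        gcongr
        exact hceil.liminf_le_liminf_comp (u := fun n : ℕ => u n / n)
    _ = liminf (fun n : ℕ => ENNReal.ofReal c * (u ⌈c * n⌉₊ / ⌈c * n⌉₊)) atTop :=
        (ENNReal.liminf_const_mul_of_ne_zero_of_ne_top (ENNReal.ofReal_pos.2 hc).ne'
          ENNReal.ofReal_ne_top).symm
    _ ≤ liminf (fun n : ℕ => u ⌈c * n⌉₊ / n) atTop := liminf_le_liminf hterm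

variable {k : ℕ}

theorem shiftMap_iterate_apply (i : ℕ) (x : ℕ → Fin k) (n : ℕ) :
    (shiftMap k)^[i] x n = x (n + i) := by
  induction i generalizing x with
  | zero => rfl
  | succ i ih => rw [Function.iterate_succ_apply, ih, shiftMap, add_assoc]

theorem exp_neg_le_shiftDist {x y : ℕ → Fin k} {n : ℕ} (h : x n ≠ y n) :
    Real.exp (-n) ≤ shiftDist x y := by
  have hxy : x ≠ y := fun e => h (congrFun e n)
  have hfirst : sInf {m | x m ≠ y m} ≤ n := Nat.sInf_le h
  rw [shiftDist, if_neg hxy]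
  gcongr

theorem bowenBall_subset_cylinder {α : ℝ} (hα : 0 ≤ α) (x : ℕ → Fin k) (n : ℕ) :
    bowenBall shiftDist (shiftMap k) α n x (Real.exp (-(1 + α))) ⊆
      PiNat.cylinder x ⌈(1 + α) * n⌉₊ := by
  intro y hy j hj
  by_contra hne
  have hj' : (j : ℝ) < (1 + α) * n := Nat.lt_ceil.1 hj
  -- Time `i ≤ j` forces `y j = x j` once `j ≤ (1 + α) * (i + 1)`, so the last
  -- available time is best.
  obtain ⟨i, hin, hij, hji⟩ : ∃ i < n, i ≤ j ∧ (j : ℝ) ≤ (1 + α) * (i + 1) := by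
    rcases lt_or_ge j n with hjn | hnj
    · exact ⟨j, hjn, le_rfl, by nlinarith [(j.cast_nonneg : (0 : ℝ) ≤ j)]⟩
    · obtain ⟨m, rfl⟩ : ∃ m, n = m + 1 := Nat.exists_eq_succ_of_ne_zero <| by
        rintro rfl
        simp at hj
      exact ⟨m, m.lt_succ_self, by omega, by exact_mod_cast hj'.le⟩
  obtain ⟨l, rfl⟩ := Nat.exists_eq_add_of_le' hij
  have hdiff : (shiftMap k)^[i] x l ≠ (shiftMap k)^[i] y l := by
    simpa only [shiftMap_iterate_apply] using Ne.symm hne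
  have hlt : Real.exp (α * i + -l) < Real.exp (-(1 + α)) :=
    calc Real.exp (α * i + -l) = Real.exp (α * i) * Real.exp (-l) := Real.exp_add _ _
      _ ≤ Real.exp (α * i) * shiftDist ((shiftMap k)^[i] x) ((shiftMap k)^[i] y) := by
          gcongr; exact exp_neg_le_shiftDist hdiff
      _ < Real.exp (-(1 + α)) := hy i hin
  rw [Real.exp_lt_exp] at hlt
  push_cast at hji
  linarith

/-- The lower exponential decay rate of `μ` along the cylinders around `x`, that is, the lower local
entropy of `μ` at `x` for the partition into first symbols. It is the quantity with which the
`α`-local Brin–Katok entropy is compared, for an arbitrary measure. -/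
def lowerCylinderRate (μ : Measure (ℕ → Fin k)) (x : ℕ → Fin k) : ℝ≥0∞ :=
  liminf (fun n : ℕ => negLog (μ (PiNat.cylinder x n)) / n) atTop

theorem lowerCylinderRate_eq_negLog {μ : Measure (ℕ → Fin k)} {x : ℕ → Fin k} {t : ℝ≥0∞}
    (h : ∀ n, μ (PiNat.cylinder x n) = t ^ n) : lowerCylinderRate μ x = negLog t := by
  simpa only [lowerCylinderRate, h] using (tendsto_negLog_pow_div t).liminf_eq

theorem ofReal_mul_lowerCylinderRate_le_localBKn {α : ℝ} (hα : 0 ≤ α)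
    (μ : Measure (ℕ → Fin k)) (x : ℕ → Fin k) :
    ENNReal.ofReal (1 + α) * lowerCylinderRate μ x ≤ localBKn shiftDist (shiftMap k) α μ x :=
  calc ENNReal.ofReal (1 + α) * lowerCylinderRate μ x
      ≤ liminf (fun n : ℕ => negLog (μ (PiNat.cylinder x ⌈(1 + α) * n⌉₊)) / n) atTop :=
        ofReal_mul_liminf_div_le_liminf_ceil_mul (by positivity)
          fun n => negLog (μ (PiNat.cylinder x n))
    _ ≤ liminf (fun n : ℕ => negLog (μ (bowenBall shiftDist (shiftMap k) α n x
          (Real.exp (-(1 + α))))) / n) atTop :=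
        liminf_le_liminf <| .of_forall fun n => ENNReal.div_le_div_right
          (negLog_antitone (measure_mono (bowenBall_subset_cylinder hα x n))) _
    _ ≤ localBKn shiftDist (shiftMap k) α μ x :=
        le_iSup₂_of_le (Real.exp (-(1 + α))) (Real.exp_pos _) le_rfl

end AlphaBS

theorem stmt17_general {k : ℕ} (μ : Measure (ℕ → Fin k)) {α : ℝ} (hα : 0 ≤ α) :
    (∀ x : ℕ → Fin k,
      ENNReal.ofReal (1 + α) * lowerCylinderRate μ x ≤ localBKn shiftDist (shiftMap k) α μ x) ∧
    ENNReal.ofReal (1 + α) * ∫⁻ x, lowerCylinderRate μ x ∂μ ≤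
      BKn shiftDist (shiftMap k) α μ := by
  have hlocal := ofReal_mul_lowerCylinderRate_le_localBKn hα μ
  exact ⟨hlocal, (lintegral_const_mul_le _ _).trans (lintegral_mono hlocal)⟩

/-- for the uniform Bernoulli measure `μ` on the full shift,
`P_μ^α(σ,x,1) ≥ (1+α) log k` for every `x`, hence `P_μ^α(σ,1) ≥ (1+α) log k`. -/
theorem stmt17 (k : ℕ) (hk : 0 < k) (μ : Measure (ℕ → Fin k))
    [IsProbabilityMeasure μ]
    (hcyl : ∀ (x : ℕ → Fin k) (n : ℕ),
      μ {y | ∀ i < n, y i = x i} = ((k : ℝ≥0∞))⁻¹ ^ n)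
    (α : ℝ) (hα : 0 ≤ α) :
    (∀ x : ℕ → Fin k,
      ENNReal.ofReal ((1 + α) * Real.log k) ≤
        localBKn (shiftDist (k := k)) (shiftMap k) α μ x) ∧
    ENNReal.ofReal ((1 + α) * Real.log k) ≤
      BKn (shiftDist (k := k)) (shiftMap k) α μ := by
  have hrate (x : ℕ → Fin k) : lowerCylinderRate μ x = ENNReal.ofReal (Real.log k) := by
    rw [lowerCylinderRate_eq_negLog (hcyl x), negLog_inv (ENNReal.natCast_ne_top k),
      ENNReal.toReal_natCast]
  simpa only [hrate, ENNReal.ofReal_mul (show 0 ≤ 1 + α by positivity), lintegral_const,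
    measure_univ, mul_one] using stmt17_general μ hα

end
end

section
/- Let (Σ_k^+, d, σ) be the full one-sided shift on k ≥ 2 symbols. Then the neutralized topological entropy satisfies \tilde h_top(σ, Σ_k^+) = log k, and hence for every α > 0, \tilde h_top(σ, Σ_k^+) = log k < (1+α)·log k = h_top^α(σ, Σ_k^+). -/
open Filter Set MeasureTheory ENNReal
open scoped Classical NNReal

noncomputable section

open AlphaBS

/-!
For `α ≥ 0` and `s ≥ 0` the Bowen condition of radius `e^{-s}` at time `i ≤ n` constrains exactly
the coordinates `i, …, i + ⌊α i + s⌋`. Together these windows exhaust the coordinates up to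
`(1 + α) n + s`, so the Bowen ball of order `n + 1` is a cylinder of length `⌊(1 + α) n + s⌋ + 1`,
and covering the shift space takes exactly one ball per word of that length. For fixed `s` the
growth rate is `(1 + α) log k`. The neutralized ball is the case `α = 0`, `s = (n + 1) ε`, with
growth rate `(1 + ε) log k`, which tends to `log k` as `ε → 0`.
-/

namespace AlphaBS

/-- The covering number of a family of sets `B x` indexed by their centers: the least number of
members of the family that cover the space. As an infimum in `ℕ`, it is `0` when no finite subfamily
covers. -/
def coverNum (B : X → Set X) : ℕ :=
  sInf {m : ℕ | ∃ E : Finset X, E.card = m ∧ ∀ x, ∃ y ∈ E, x ∈ B y}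

lemma coverNum_le_of_subset {B C : X → Set X} (hBC : ∀ x, B x ⊆ C x) (hB : 0 < coverNum B) :
    coverNum C ≤ coverNum B := by
  obtain ⟨E, hE, hcover⟩ := Nat.sInf_mem (Nat.nonempty_of_pos_sInf hB)
  refine Nat.sInf_le ⟨E, hE, fun x => ?_⟩
  obtain ⟨y, hy, hxy⟩ := hcover x
  exact ⟨y, hy, hBC y hxy⟩

lemma coverNum_preimage_singleton {Y : Type*} [Finite Y] {g : X → Y}
    (hg : Function.Surjective g) : coverNum (fun x => g ⁻¹' {g x}) = Nat.card Y := by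
  have := Fintype.ofFinite Y
  rw [Nat.card_eq_fintype_card]
  have card_le (E : Finset X) (hcover : ∀ x, ∃ y ∈ E, g x = g y) :
      Fintype.card Y ≤ E.card := by
    have image_eq_univ : E.image g = Finset.univ := by
      refine Finset.eq_univ_of_forall <| hg.forall.2 fun x => Finset.mem_image.2 ?_
      simpa [eq_comm] using hcover x
    simpa [image_eq_univ] using E.card_image_le (f := g)
  have transversal_mem : Fintype.card Y ∈
      {m : ℕ | ∃ E : Finset X, E.card = m ∧ ∀ x, ∃ y ∈ E, x ∈ g ⁻¹' {g y}} := by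
    refine ⟨Finset.univ.image (Function.surjInv hg), ?_, fun x => ?_⟩
    · exact Finset.card_image_of_injective _ (Function.injective_surjInv hg)
    · exact ⟨_, Finset.mem_image_of_mem _ (Finset.mem_univ (g x)),
        (Function.surjInv_eq hg (g x)).symm⟩
  refine le_antisymm (Nat.sInf_le transversal_mem) (le_csInf ⟨_, transversal_mem⟩ ?_)
  rintro _ ⟨E, rfl, hcover⟩
  exact card_le E hcover

lemma coverNum_cylinder {A : Type*} [Finite A] [Nonempty A] (L : ℕ) :
    coverNum (fun x : ℕ → A => PiNat.cylinder x L) = Nat.card A ^ L := by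
  have restrict_surjective : Function.Surjective fun (x : ℕ → A) (i : Fin L) => x i :=
    Fin.val_injective.surjective_comp_right
  have cylinder_eq (x : ℕ → A) : PiNat.cylinder x L =
      (fun (y : ℕ → A) (i : Fin L) => y i) ⁻¹' {fun i : Fin L => x i} := by
    ext y
    simp [PiNat.mem_cylinder_iff, funext_iff, Fin.forall_iff]
  simp only [cylinder_eq, coverNum_preimage_singleton restrict_surjective, Nat.card_fun,
    Nat.card_fin]

lemma tendsto_floor_add_one_div {c b : ℝ} (hc : 0 ≤ c) (hb : 0 ≤ b) :
    Tendsto (fun n : ℕ => ((⌊c * n + b⌋₊ + 1 : ℕ) : ℝ) / (n + 1 : ℕ)) atTop (nhds c) := by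
  have tendsto_affine (a : ℝ) :
      Tendsto (fun n : ℕ => (c * n + a) / ((n + 1 : ℕ) : ℝ)) atTop (nhds c) := by
    simpa [add_comm] using tendsto_add_mul_div_add_mul_atTop_nhds a 1 c one_ne_zero
  refine tendsto_of_tendsto_of_tendsto_of_le_of_le (tendsto_affine b) (tendsto_affine (b + 1))
    (fun n => div_le_div_of_nonneg_right ?_ (Nat.cast_nonneg _))
    (fun n => div_le_div_of_nonneg_right ?_ (Nat.cast_nonneg _))
  · exact_mod_cast (Nat.lt_floor_add_one _).le
  · push_cast
    linarith [Nat.floor_le (by positivity : 0 ≤ c * n + b)]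

lemma limsup_log_div_eq_of_eq_pow {N : ℕ → ℕ} {k : ℕ} {c b : ℝ} (hc : 0 ≤ c) (hb : 0 ≤ b)
    (hN : ∀ n : ℕ, N (n + 1) = k ^ (⌊c * n + b⌋₊ + 1)) :
    limsup (fun n : ℕ => ((Real.log (N n) / n : ℝ) : EReal)) atTop =
      ((c * Real.log k : ℝ) : EReal) := by
  rw [← limsup_nat_add _ 1]
  refine Tendsto.limsup_eq (EReal.tendsto_coe.2 ?_)
  refine ((tendsto_floor_add_one_div hc hb).mul_const (Real.log k)).congr fun n => ?_
  rw [hN, Nat.cast_pow, Real.log_pow, div_mul_eq_mul_div]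

section BowenCovers

variable {d : X → X → ℝ} {f : X → X}

lemma spanNum_eq_coverNum (α ε : ℝ) (n : ℕ) :
    spanNum d f α ε n = coverNum fun x => bowenBall d f α n x ε :=
  rfl

lemma neutNum_eq_spanNum (ε : ℝ) (n : ℕ) :
    neutNum d f ε n = spanNum d f 0 (Real.exp (-(n * ε))) n := by
  simp [neutNum, spanNum]

lemma htopSpanE_le_of_le {α ε δ : ℝ} (hεδ : ε ≤ δ)
    (hpos : ∀ᶠ n in atTop, 0 < spanNum d f α ε n) :
    htopSpanE d f α δ ≤ htopSpanE d f α ε := by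
  refine limsup_le_limsup ?_
  filter_upwards [hpos] with n hn
  have spanNum_le : spanNum d f α δ n ≤ spanNum d f α ε n :=
    coverNum_le_of_subset (fun _ _ hy i hi => (hy i hi).trans_le hεδ) hn
  refine EReal.coe_le_coe_iff.2 (div_le_div_of_nonneg_right ?_ n.cast_nonneg)
  rcases Nat.eq_zero_or_pos (spanNum d f α δ n) with hzero | hδpos
  · simpa [hzero] using Real.log_natCast_nonneg (spanNum d f α ε n)
  · gcongr

end BowenCovers

section FullShift

variable {k : ℕ}

lemma iterate_shiftMap_apply (n : ℕ) (x : ℕ → Fin k) (j : ℕ) :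
    (shiftMap k)^[n] x j = x (n + j) := by
  induction n generalizing x with
  | zero => simp
  | succ n ih => rw [Function.iterate_succ_apply, ih, shiftMap, Nat.add_right_comm]

lemma shiftDist_of_ne {x y : ℕ → Fin k} (hxy : x ≠ y) :
    shiftDist x y = Real.exp (-(PiNat.firstDiff x y : ℝ)) := by
  have firstDiff_isLeast : IsLeast {n | x n ≠ y n} (PiNat.firstDiff x y) :=
    ⟨PiNat.apply_firstDiff_ne hxy,
      fun _ hn => not_lt.1 fun hlt => hn (PiNat.apply_eq_of_lt_firstDiff hlt)⟩
  rw [shiftDist, if_neg hxy, firstDiff_isLeast.csInf_eq]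

lemma exp_mul_shiftDist_lt_exp_neg_iff {x y : ℕ → Fin k} {a s : ℝ} :
    Real.exp a * shiftDist x y < Real.exp (-s) ↔ ∀ j : ℕ, (j : ℝ) ≤ a + s → x j = y j := by
  rcases eq_or_ne x y with rfl | hxy
  · simp [shiftDist, Real.exp_pos]
  rw [shiftDist_of_ne hxy, ← Real.exp_add, Real.exp_lt_exp]
  constructor
  · intro hlt j hj
    refine PiNat.apply_eq_of_lt_firstDiff (Nat.cast_lt (α := ℝ).1 ?_)
    linarith
  · intro hagree
    by_contra! hle
    exact PiNat.apply_firstDiff_ne hxy (hagree _ (by linarith))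

theorem bowenBall_shift_eq_cylinder {α s : ℝ} (hα : 0 ≤ α) (hs : 0 ≤ s) (n : ℕ)
    (x : ℕ → Fin k) :
    bowenBall shiftDist (shiftMap k) α (n + 1) x (Real.exp (-s)) =
      PiNat.cylinder x (⌊(1 + α) * n + s⌋₊ + 1) := by
  have hnonneg : 0 ≤ (1 + α) * n + s := by positivity
  ext y
  simp only [bowenBall, mem_ofPred_eq, exp_mul_shiftDist_lt_exp_neg_iff, iterate_shiftMap_apply,
    PiNat.mem_cylinder_iff, Nat.lt_succ_iff, Nat.le_floor_iff hnonneg, eq_comm (a := x _)]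
  constructor
  · intro hball p hp
    rcases le_total p n with hpn | hnp
    · exact hball p hpn 0 (by push_cast; positivity)
    · obtain ⟨j, rfl⟩ := Nat.exists_eq_add_of_le hnp
      refine hball n le_rfl j ?_
      push_cast at hp
      linarith
  · intro hagree i hi j hj
    refine hagree (i + j) ?_
    have hi' : (1 + α) * i ≤ (1 + α) * n := by gcongr
    push_cast
    linarith

variable [NeZero k]

theorem spanNum_shift {α s : ℝ} (hα : 0 ≤ α) (hs : 0 ≤ s) (n : ℕ) :
    spanNum shiftDist (shiftMap k) α (Real.exp (-s)) (n + 1) =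
      k ^ (⌊(1 + α) * n + s⌋₊ + 1) := by
  simp only [spanNum_eq_coverNum, bowenBall_shift_eq_cylinder hα hs, coverNum_cylinder,
    Nat.card_fin]

theorem neutNum_shift {ε : ℝ} (hε : 0 ≤ ε) (n : ℕ) :
    neutNum shiftDist (shiftMap k) ε (n + 1) = k ^ (⌊(1 + ε) * n + ε⌋₊ + 1) := by
  rw [neutNum_eq_spanNum, spanNum_shift le_rfl (by positivity)]
  push_cast
  ring_nf

theorem htopSpanE_shift {α s : ℝ} (hα : 0 ≤ α) (hs : 0 ≤ s) :
    htopSpanE shiftDist (shiftMap k) α (Real.exp (-s)) = (((1 + α) * Real.log k : ℝ) : EReal) :=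
  limsup_log_div_eq_of_eq_pow (by positivity) hs (spanNum_shift hα hs)

theorem neutEntE_shift {ε : ℝ} (hε : 0 ≤ ε) :
    neutEntE shiftDist (shiftMap k) ε = (((1 + ε) * Real.log k : ℝ) : EReal) :=
  limsup_log_div_eq_of_eq_pow (by positivity) hε (neutNum_shift hε)

theorem htopSpan_shift {α : ℝ} (hα : 0 ≤ α) :
    htopSpan shiftDist (shiftMap k) α = (((1 + α) * Real.log k : ℝ) : EReal) := by
  refine le_antisymm (iSup₂_le fun δ hδ => ?_) ?_
  · have hle : Real.exp (-|Real.log δ|) ≤ δ :=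
      (Real.exp_le_exp.2 (neg_abs_le _)).trans_eq (Real.exp_log hδ)
    rw [← htopSpanE_shift hα (abs_nonneg (Real.log δ))]
    refine htopSpanE_le_of_le hle ?_
    filter_upwards [eventually_ge_atTop 1] with n hn
    obtain ⟨m, rfl⟩ := Nat.exists_eq_add_of_le' hn
    rw [spanNum_shift hα (abs_nonneg _)]
    exact pow_pos (NeZero.pos k) _
  · rw [← htopSpanE_shift hα le_rfl]
    exact le_iSup₂ (f := fun (δ : ℝ) (_ : 0 < δ) => htopSpanE shiftDist (shiftMap k) α δ)
      (Real.exp (-0)) (Real.exp_pos _)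

theorem neutEnt_shift :
    neutEnt shiftDist (shiftMap k) = ((Real.log k : ℝ) : EReal) := by
  have hlog : 0 ≤ Real.log k := Real.log_natCast_nonneg k
  refine le_antisymm ?_ (le_iInf₂ fun ε hε => ?_)
  · have tendsto_rate : Tendsto (fun ε : ℝ => (((1 + ε) * Real.log k : ℝ) : EReal))
        (nhdsWithin 0 (Ioi 0)) (nhds ((Real.log k : ℝ) : EReal)) := by
      refine EReal.tendsto_coe.2 (Tendsto.mono_left ?_ nhdsWithin_le_nhds)
      exact Continuous.tendsto' (by fun_prop) _ _ (by simp)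
    refine ge_of_tendsto tendsto_rate ?_
    filter_upwards [self_mem_nhdsWithin] with ε hε
    exact (iInf₂_le ε hε).trans_eq (neutEntE_shift (le_of_lt hε))
  · rw [neutEntE_shift hε.le, EReal.coe_le_coe_iff]
    exact le_mul_of_one_le_left hlog (by linarith)

end FullShift

end AlphaBS

/-- for the full shift on `k ≥ 2` symbols, the neutralized topological
entropy equals `log k`, which is strictly smaller than
`h_top^α(σ,Σ_k^+) = (1+α) log k` for every `α > 0`. -/
theorem stmt18 (k : ℕ) (hk : 2 ≤ k) :
    neutEnt (shiftDist (k := k)) (shiftMap k) = ((Real.log k : ℝ) : EReal) ∧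
    ∀ α : ℝ, 0 < α →
      ((Real.log k : ℝ) : EReal) < (((1 + α) * Real.log k : ℝ) : EReal) ∧
      htopSpan (shiftDist (k := k)) (shiftMap k) α =
        (((1 + α) * Real.log k : ℝ) : EReal) := by
  have : NeZero k := ⟨by lia⟩
  have hlog : 0 < Real.log k := Real.log_pos (by exact_mod_cast hk)
  refine ⟨neutEnt_shift, fun α hα => ⟨?_, htopSpan_shift hα.le⟩⟩
  exact EReal.coe_lt_coe_iff.2 (lt_mul_of_one_lt_left hlog (by linarith))

end
end
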